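/- Assume the ground truth reward r_G satisfies the reward structure assumption, the initial parameters θ_0 satisfy the initial policy assumption (general-features case), and the feature vectors satisfy the negative-inner-product feature assumption. Let r_P be identical to r_G except that r_P(y_med) = min_{y∈Y_bad} r_G(y), and let ε ∈ (0, Δ1). If θ_t is the gradient flow maximizing V_P, then there exists a time t ≤ (r_G(y_⋆) + 1)² / (ε² (r_P(y_⋆) − V_P(θ_0)) ‖φ(y_⋆)‖²) · π_{θ_0}(y_⋆)^{−1} at which V_G(θ_t) ≥ r_G(y_⋆) − ε. -/

import Mathlib

/-!
Since all outputs other than `ystar` have the same proxy reward `b`, the proxy objective is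
`V = b + c * π` with `c = rP ystar - b` and `π` the probability of `ystar`. As
`∇π = π • (φ ystar - E_π φ)`, along the gradient flow `(1 / π)' = -c * ‖φ ystar - E_π φ‖ ^ 2`.
No other feature has positive inner product with `φ ystar`, so
`(1 - π) * ‖φ ystar‖ ≤ ‖φ ystar - E_π φ‖`. While `V < rP ystar - ε`, that is `ε < c * (1 - π)`,
the positive quantity `1 / π` thus decreases at rate more than `ε ^ 2 * ‖φ ystar‖ ^ 2 / c`, so this
phase must end by time `c / (ε ^ 2 * ‖φ ystar‖ ^ 2)` times the initial value of `1 / π`. The ground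
truth reward dominates the proxy, so its expectation is then at least as large.
-/

open scoped BigOperators RealInnerProductSpace

noncomputable def policy {Y : Type*} [Fintype Y] {D : ℕ}
    (φ : Y → EuclideanSpace ℝ (Fin D)) (θ : EuclideanSpace ℝ (Fin D)) (y : Y) : ℝ :=
  Real.exp ⟪φ y, θ⟫ / ∑ z, Real.exp ⟪φ z, θ⟫

noncomputable def expReward {Y : Type*} [Fintype Y] {D : ℕ}
    (φ : Y → EuclideanSpace ℝ (Fin D)) (r : Y → ℝ) (θ : EuclideanSpace ℝ (Fin D)) : ℝ :=
  ∑ y, policy φ θ y * r y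

open Set

theorem exists_neg_div_lt_of_hasDerivWithinAt {f f' : ℝ → ℝ} {a b : ℝ} (hab : a < b)
    (hf : ∀ t ∈ Icc a b, HasDerivWithinAt f (f' t) (Icc a b) t) (hfb : 0 < f b) :
    ∃ t ∈ Ioo a b, -(f a / (b - a)) < f' t := by
  obtain ⟨t, ht, hslope⟩ := exists_hasDerivAt_eq_slope f f' hab
    (fun t ht => (hf t ht).continuousWithinAt)
    fun t ht => (hf t (Ioo_subset_Icc_self ht)).hasDerivAt (Icc_mem_nhds ht.1 ht.2)
  refine ⟨t, ht, ?_⟩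
  rw [hslope, ← neg_div]
  exact div_lt_div_of_pos_right (by linarith) (sub_pos.2 hab)

theorem hasGradientAt_exp_inner {E : Type*} [NormedAddCommGroup E] [InnerProductSpace ℝ E]
    [CompleteSpace E] (v x : E) :
    HasGradientAt (fun x => Real.exp ⟪v, x⟫) (Real.exp ⟪v, x⟫ • v) x := by
  rw [hasGradientAt_iff_hasFDerivAt, map_smul]
  exact ((innerSL ℝ v).hasFDerivAt (x := x)).exp

section Policy

variable {Y : Type*} [Fintype Y] {D : ℕ} (φ : Y → EuclideanSpace ℝ (Fin D))
  (θ : EuclideanSpace ℝ (Fin D))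

theorem sum_exp_inner_pos [Nonempty Y] : 0 < ∑ z, Real.exp ⟪φ z, θ⟫ :=
  Finset.sum_pos (fun _ _ => Real.exp_pos _) Finset.univ_nonempty

theorem policy_pos (y : Y) : 0 < policy φ θ y :=
  have : Nonempty Y := ⟨y⟩
  div_pos (Real.exp_pos _) (sum_exp_inner_pos φ θ)

theorem sum_policy [Nonempty Y] : ∑ y, policy φ θ y = 1 := by
  simp only [policy, ← Finset.sum_div, div_self (sum_exp_inner_pos φ θ).ne']

theorem policy_lt_one [Nontrivial Y] (y : Y) : policy φ θ y < 1 := by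
  obtain ⟨z, hz⟩ := exists_ne y
  rw [← sum_policy φ θ]
  exact Finset.single_lt_sum hz (Finset.mem_univ y) (Finset.mem_univ z) (policy_pos φ θ z)
    fun x _ _ => (policy_pos φ θ x).le

theorem expReward_mono {r r' : Y → ℝ} (h : ∀ y, r y ≤ r' y) :
    expReward φ r θ ≤ expReward φ r' θ :=
  Finset.sum_le_sum fun y _ => mul_le_mul_of_nonneg_left (h y) (policy_pos φ θ y).le

theorem expReward_eq_add_mul_policy {r : Y → ℝ} {w : Y} {b : ℝ} (hr : ∀ y ≠ w, r y = b) :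
    expReward φ r θ = b + (r w - b) * policy φ θ w := by
  have : Nonempty Y := ⟨w⟩
  have hdiff : ∑ y, policy φ θ y * (r y - b) = policy φ θ w * (r w - b) :=
    Fintype.sum_eq_single w fun y hy => by rw [hr y hy, sub_self, mul_zero]
  simp only [mul_sub, Finset.sum_sub_distrib, ← Finset.sum_mul, sum_policy] at hdiff
  rw [expReward]
  linarith

theorem lt_expReward {r : Y → ℝ} {w : Y} {b : ℝ} (hr : ∀ y ≠ w, r y = b) (hb : b < r w) :
    b < expReward φ r θ := by
  rw [expReward_eq_add_mul_policy φ θ hr]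
  exact lt_add_of_pos_right b (mul_pos (sub_pos.2 hb) (policy_pos φ θ w))

theorem expReward_lt [Nontrivial Y] {r : Y → ℝ} {w : Y} {b : ℝ} (hr : ∀ y ≠ w, r y = b)
    (hb : b < r w) : expReward φ r θ < r w := by
  rw [expReward_eq_add_mul_policy φ θ hr, ← lt_sub_iff_add_lt']
  exact mul_lt_of_lt_one_right (sub_pos.2 hb) (policy_lt_one φ θ w)

/-- The expected feature vector `E_{y ∼ π_θ} φ(y)`; subtracting it from `φ y` gives the gradient
of `θ ↦ log π_θ(y)`. -/
noncomputable def meanFeature : EuclideanSpace ℝ (Fin D) :=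
  ∑ y, policy φ θ y • φ y

theorem hasGradientAt_sum_exp_inner [Nonempty Y] :
    HasGradientAt (fun θ => ∑ z, Real.exp ⟪φ z, θ⟫)
      ((∑ z, Real.exp ⟪φ z, θ⟫) • meanFeature φ θ) θ := by
  have hmean : (∑ z, Real.exp ⟪φ z, θ⟫) • meanFeature φ θ = ∑ z, Real.exp ⟪φ z, θ⟫ • φ z := by
    simp only [meanFeature, Finset.smul_sum, policy, smul_smul,
      mul_div_cancel₀ _ (sum_exp_inner_pos φ θ).ne']
  rw [hmean, hasGradientAt_iff_hasFDerivAt, map_sum]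
  exact HasFDerivAt.fun_sum fun z _ => (hasGradientAt_exp_inner (φ z) θ).hasFDerivAt

theorem hasGradientAt_policy (y : Y) :
    HasGradientAt (fun θ => policy φ θ y) (policy φ θ y • (φ y - meanFeature φ θ)) θ := by
  have : Nonempty Y := ⟨y⟩
  have hZ := (sum_exp_inner_pos φ θ).ne'
  have hnum := (hasGradientAt_exp_inner (φ y) θ).hasFDerivAt
  have hinv := (hasDerivAt_inv hZ).comp_hasFDerivAt θ (hasGradientAt_sum_exp_inner φ θ).hasFDerivAt
  refine hasGradientAt_iff_hasFDerivAt.2 ((hnum.fun_mul hinv).congr_fderiv ?_)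
  ext v
  simp only [policy, Function.comp_apply, map_smul, map_sub, add_apply, sub_apply,
    smul_apply, smul_eq_mul]
  field_simp
  ring

theorem gradient_expReward {r : Y → ℝ} {w : Y} {b : ℝ} (hr : ∀ y ≠ w, r y = b) :
    gradient (expReward φ r) θ =
      ((r w - b) * policy φ θ w) • (φ w - meanFeature φ θ) := by
  have hV : expReward φ r = fun θ => b + (r w - b) * policy φ θ w :=
    funext fun θ => expReward_eq_add_mul_policy φ θ hr
  have hgrad := ((hasGradientAt_policy φ θ w).hasFDerivAt.const_mul (r w - b)).const_add b
  rw [hV, mul_smul]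
  exact HasGradientAt.gradient (hasGradientAt_iff_hasFDerivAt.2 (by rwa [map_smul]))

theorem one_sub_policy_mul_norm_le_norm_sub_meanFeature {w : Y} (hinner : ∀ y ≠ w, ⟪φ y, φ w⟫ ≤ 0) :
    (1 - policy φ θ w) * ‖φ w‖ ≤ ‖φ w - meanFeature φ θ‖ := by
  rcases (norm_nonneg (φ w)).eq_or_lt with hw | hw
  · simp [← hw]
  have hmean : ⟪meanFeature φ θ, φ w⟫ ≤ policy φ θ w * ‖φ w‖ ^ 2 := by
    classical
    rw [meanFeature, sum_inner, Fintype.sum_eq_add_sum_compl w, ← real_inner_self_eq_norm_sq,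
      ← real_inner_smul_left]
    refine add_le_of_nonpos_right (Finset.sum_nonpos fun y hy => ?_)
    rw [real_inner_smul_left]
    exact mul_nonpos_of_nonneg_of_nonpos (policy_pos φ θ y).le (hinner y (by simpa using hy))
  refine le_of_mul_le_mul_right ?_ hw
  calc (1 - policy φ θ w) * ‖φ w‖ * ‖φ w‖ = ‖φ w‖ ^ 2 - policy φ θ w * ‖φ w‖ ^ 2 := by ring
    _ ≤ ‖φ w‖ ^ 2 - ⟪meanFeature φ θ, φ w⟫ := by gcongr
    _ = ⟪φ w - meanFeature φ θ, φ w⟫ := by rw [inner_sub_left, real_inner_self_eq_norm_sq]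
    _ ≤ ‖φ w - meanFeature φ θ‖ * ‖φ w‖ := real_inner_le_norm _ _

end Policy

section GradientFlow

variable {Y : Type*} [Fintype Y] {D : ℕ} {φ : Y → EuclideanSpace ℝ (Fin D)} {r : Y → ℝ} {w : Y}
  {b : ℝ} {θt : ℝ → EuclideanSpace ℝ (Fin D)}

theorem hasDerivWithinAt_inv_policy {S : Set ℝ} (hr : ∀ y ≠ w, r y = b)
    (hflow : IsIntegralCurveOn θt (fun _ => gradient (expReward φ r)) S) {t : ℝ} (ht : t ∈ S) :
    HasDerivWithinAt (fun t => (policy φ (θt t) w)⁻¹)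
      (-((r w - b) * ‖φ w - meanFeature φ (θt t)‖ ^ 2)) S t := by
  have hpos := (policy_pos φ (θt t) w).ne'
  have hpolicy := (hasGradientAt_policy φ (θt t) w).hasFDerivAt.comp_hasDerivWithinAt t
    (hflow t ht)
  refine (hpolicy.fun_inv hpos).congr_deriv ?_
  simp only [gradient_expReward φ (θt t) hr, map_smul, smul_apply, smul_eq_mul,
    InnerProductSpace.toDual_apply_apply, real_inner_self_eq_norm_sq, Function.comp_apply]
  field_simp

theorem exists_sub_le_expReward_of_gradientFlow (hw : φ w ≠ 0)
    (hinner : ∀ y ≠ w, ⟪φ y, φ w⟫ ≤ 0) (hr : ∀ y ≠ w, r y = b) (hb : b < r w)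
    (hflow : IsIntegralCurveOn θt (fun _ => gradient (expReward φ r)) (Ici 0))
    {ε : ℝ} (hε : 0 < ε) :
    ∃ t : ℝ, 0 ≤ t ∧ t ≤ (r w - b) / (ε ^ 2 * ‖φ w‖ ^ 2) * (policy φ (θt 0) w)⁻¹ ∧
      r w - ε ≤ expReward φ r (θt t) := by
  have hc : 0 < r w - b := sub_pos.2 hb
  have hN : 0 < ‖φ w‖ := norm_pos_iff.2 hw
  have hπ₀ := policy_pos φ (θt 0) w
  obtain ⟨t, ht, hslow⟩ := exists_neg_div_lt_of_hasDerivWithinAt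
    (b := (r w - b) / (ε ^ 2 * ‖φ w‖ ^ 2) * (policy φ (θt 0) w)⁻¹) (by positivity)
    (fun t => hasDerivWithinAt_inv_policy hr (hflow.mono Icc_subset_Ici_self))
    (inv_pos.2 (policy_pos φ _ w))
  refine ⟨t, ht.1.le, ht.2.le, ?_⟩
  have hrate : (r w - b) * ‖φ w - meanFeature φ (θt t)‖ ^ 2 < ε ^ 2 * ‖φ w‖ ^ 2 / (r w - b) := by
    rw [sub_zero] at hslow
    convert neg_lt_neg_iff.1 hslow using 1
    field_simp
  have hnorm : (r w - b) * ‖φ w - meanFeature φ (θt t)‖ < ε * ‖φ w‖ := by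
    refine lt_of_pow_lt_pow_left₀ 2 (by positivity) ?_
    rw [lt_div_iff₀ hc] at hrate
    linarith
  have hgap : (r w - b) * (1 - policy φ (θt t) w) < ε := by
    refine lt_of_mul_lt_mul_right ?_ hN.le
    calc (r w - b) * (1 - policy φ (θt t) w) * ‖φ w‖
        = (r w - b) * ((1 - policy φ (θt t) w) * ‖φ w‖) := mul_assoc _ _ _
      _ ≤ (r w - b) * ‖φ w - meanFeature φ (θt t)‖ := by
        gcongr
        exact one_sub_policy_mul_norm_le_norm_sub_meanFeature φ (θt t) hinner
      _ < ε * ‖φ w‖ := hnorm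
  rw [expReward_eq_add_mul_policy φ (θt t) hr]
  linarith

end GradientFlow

section ProxyReward

variable {Y : Type*} {rG rP : Y → ℝ} {ystar ymed ybad : Y} {Ybad : Finset Y}
  {hne : Ybad.Nonempty}

theorem proxyReward_eq_of_ne (hcover : ∀ y : Y, y = ystar ∨ y = ymed ∨ y ∈ Ybad)
    (hbad : ∀ y ∈ Ybad, rG y = rG ybad)
    (heq : ∀ y ≠ ymed, rP y = rG y) (hmed : rP ymed = Ybad.inf' hne rG) {y : Y}
    (hy : y ≠ ystar) : rP y = rG ybad := by
  rcases eq_or_ne y ymed with rfl | hmed_ne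
  · rw [hmed, Finset.inf'_congr _ rfl hbad, Finset.inf'_const]
  · rw [heq y hmed_ne, hbad y (((hcover y).resolve_left hy).resolve_left hmed_ne)]

theorem proxyReward_le (hybad : ybad ∈ Ybad) (hle : rG ybad ≤ rG ymed)
    (heq : ∀ y ≠ ymed, rP y = rG y) (hmed : rP ymed = Ybad.inf' hne rG) (y : Y) :
    rP y ≤ rG y := by
  rcases eq_or_ne y ymed with rfl | hy
  · exact hmed ▸ (Finset.inf'_le rG hybad).trans hle
  · exact (heq y hy).le

end ProxyReward

theorem fast_opt_neg_inner_general {Y : Type*} [Fintype Y] [Nontrivial Y] {D : ℕ}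
    {φ : Y → EuclideanSpace ℝ (Fin D)} {rG rP : Y → ℝ} {ystar : Y} {b : ℝ}
    (hφ : φ ystar ≠ 0) (hinner : ∀ y ≠ ystar, ⟪φ y, φ ystar⟫ ≤ 0)
    (hrP : ∀ y ≠ ystar, rP y = b) (hb : -1 ≤ b) (hgap : b < rP ystar)
    (hle : ∀ y, rP y ≤ rG y) {θt : ℝ → EuclideanSpace ℝ (Fin D)}
    (hflow : IsIntegralCurveOn θt (fun _ => gradient (expReward φ rP)) (Ici 0))
    {ε : ℝ} (hε : 0 < ε) :
    ∃ t : ℝ, 0 ≤ t ∧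
      t ≤ (rP ystar + 1) ^ 2
            / (ε ^ 2 * (rP ystar - expReward φ rP (θt 0)) * ‖φ ystar‖ ^ 2)
          * (policy φ (θt 0) ystar)⁻¹ ∧
      rP ystar - ε ≤ expReward φ rG (θt t) := by
  obtain ⟨t, ht₀, ht, hV⟩ := exists_sub_le_expReward_of_gradientFlow hφ hinner hrP hgap hflow hε
  refine ⟨t, ht₀, ht.trans ?_, hV.trans (expReward_mono φ (θt t) hle)⟩
  have hsub_pos : 0 < rP ystar - expReward φ rP (θt 0) :=
    sub_pos.2 (expReward_lt φ (θt 0) hrP hgap)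
  have hsq : (rP ystar - b) * (rP ystar - expReward φ rP (θt 0)) ≤ (rP ystar + 1) ^ 2 := by
    have hlt := lt_expReward φ (θt 0) hrP hgap
    rw [sq]
    gcongr <;> linarith
  refine mul_le_mul_of_nonneg_right ?_ (inv_pos.2 (policy_pos φ (θt 0) ystar)).le
  rw [mul_right_comm, div_le_div_iff₀ (by positivity) (by positivity)]
  calc (rP ystar - b) * (ε ^ 2 * ‖φ ystar‖ ^ 2 * (rP ystar - expReward φ rP (θt 0)))
      = (rP ystar - b) * (rP ystar - expReward φ rP (θt 0)) * (ε ^ 2 * ‖φ ystar‖ ^ 2) := by ring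
    _ ≤ (rP ystar + 1) ^ 2 * (ε ^ 2 * ‖φ ystar‖ ^ 2) := by gcongr

theorem fast_opt_neg_inner {Y : Type*} [Fintype Y] {D : ℕ}
    (φ : Y → EuclideanSpace ℝ (Fin D)) (hφ : ∀ y, φ y ≠ 0)
    (rG : Y → ℝ) (hrG : ∀ y, rG y ∈ Set.Icc (-1 : ℝ) 1)
    (ystar ymed ybad : Y) (Ybad : Finset Y) (hybad : ybad ∈ Ybad)
    (hsm : ystar ≠ ymed) (hsb : ystar ∉ Ybad) (hmb : ymed ∉ Ybad)
    (hcover : ∀ y : Y, y = ystar ∨ y = ymed ∨ y ∈ Ybad)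
    (hr1 : rG ymed < rG ystar) (hr2 : 0 < rG ymed)
    (hr3 : ∀ y ∈ Ybad, rG y ≤ 0)
    (hr4 : ∀ y ∈ Ybad, rG y = rG ybad)
    (Δ1 Δ2 : ℝ) (hΔ1 : Δ1 = rG ystar - rG ymed) (hΔ2 : Δ2 = rG ymed - rG ybad)
    (s : ℝ) (hs : s = ⟪φ ystar, φ ymed⟫) (hsneg : s < 0)
    (horthbad : ∀ yb ∈ Ybad, ∀ y : Y, y ≠ yb → ⟪φ yb, φ y⟫ = 0)
    (hnormbad : ∀ yb ∈ Ybad, ‖φ yb‖ ≤ ‖φ ymed‖)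
    (rP : Y → ℝ) (hrP : ∀ y, rP y ∈ Set.Icc (-1 : ℝ) 1)
    (hrPeq : ∀ y : Y, y ≠ ymed → rP y = rG y)
    (hrPmed : rP ymed = Finset.inf' Ybad ⟨ybad, hybad⟩ rG)
    (θt : ℝ → EuclideanSpace ℝ (Fin D))
    (hflow : ∀ t : ℝ, 0 ≤ t → HasDerivAt θt (gradient (expReward φ rP) (θt t)) t)
    (B M' : ℝ)
    (hB : B = Finset.univ.sup' ⟨ystar, Finset.mem_univ ystar⟩ fun y => ‖φ y‖)
    (hM' : M' = min 1 (‖φ ymed‖ ^ 2 * rG ymed ^ ((2:ℝ)/7) / (40 * B ^ 2 * (Δ1 + Δ2))))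
    (hinit1 : policy φ (θt 0) ystar
        < min (M' * (min 0.01 ((21 * ‖φ ymed‖ ^ 2 / (1100 * B ^ 2 * (Δ1 + Δ2))) ^ ((7:ℝ)/3))) ^ ((13:ℝ)/14))
            (‖φ ymed‖ / ‖φ ystar‖ * policy φ (θt 0) ymed))
    (hinit2 : max (2 * policy φ (θt 0) ystar ^ ((7:ℝ)/13) / (Δ2 * M' ^ ((7:ℝ)/13)))
        (0.05 * rG ymed) ≤ ∑ y ∈ Ybad, policy φ (θt 0) y)
    (hinit3 : ∑ y ∈ Ybad, policy φ (θt 0) y ≤ 0.1 * rG ymed)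
    (ε : ℝ) (hε : ε ∈ Set.Ioo 0 Δ1) :
    ∃ t : ℝ, 0 ≤ t ∧
      t ≤ (rG ystar + 1) ^ 2
            / (ε ^ 2 * (rP ystar - expReward φ rP (θt 0)) * ‖φ ystar‖ ^ 2)
          * (policy φ (θt 0) ystar)⁻¹ ∧
      rG ystar - ε ≤ expReward φ rG (θt t) := by
  have : Nontrivial Y := nontrivial_of_ne ystar ymed hsm
  have hinner : ∀ y ≠ ystar, ⟪φ y, φ ystar⟫ ≤ 0 := fun y hy => by
    rcases hcover y with h | rfl | h
    · exact absurd h hy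
    · exact (real_inner_comm _ _).trans_le (hs ▸ hsneg.le)
    · exact (horthbad y h ystar hy.symm).le
  have hbad_med : rG ybad < rG ymed := (hr3 ybad hybad).trans_lt hr2
  have hstar : rP ystar = rG ystar := hrPeq ystar hsm
  have hgap : rG ybad < rP ystar := hstar ▸ hbad_med.trans hr1
  rw [← hstar]
  exact fast_opt_neg_inner_general (hφ ystar) hinner
    (fun y hy => proxyReward_eq_of_ne hcover hr4 hrPeq hrPmed hy) (hrG ybad).1 hgap
    (proxyReward_le hybad hbad_med.le hrPeq hrPmed) (fun t ht => (hflow t ht).hasDerivWithinAt) hε.1
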